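/- The quantity sup_{s ≥ 3} sup_{θ ∈ (0,π]} θ^{1+2/(s−1)} · b_s(cos θ) · sin θ is finite, where b_s is the angular part of the collision kernel. -/

import Mathlib

/-!
Put `p = s - 1 ≥ 2`, `x = x_s((π - θ)/2)` and `ε = 1 - x²`. The radicand of `φ_s` equals
`(1 - z²) + ε (z² - z^p)`, and two elementary bounds on it carry the proof.

* It is at most `1` and decreases in `x`, so `x / √(radicand)` grows with slope at least `1` in `x`;
  so does `φ_s`
  (`phiS_expand`), and hence `x_s' ≤ 1` (`deriv_inverse_le_one`).
* By Bernoulli's inequality it is at most `(1 - z²)(1 + ε (p/2 - 1))`. Comparing with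
  `∫₀¹ dz/√(1 - z²) = π/2` gives `θ = π - 2 φ_s(x) ≤ (π/2) ε p` (`pi_sub_two_phiS_le`).

Up to the factor `2^{4/p}/2 ≤ 2`, the quantity to bound is at most
`θ (θ/ε)^{2/p} (2/(p ε) + 1)`. Since `θ/ε ≤ 2p`, the factor `(θ/ε)^{2/p}` is at most
`(2p)^{2/p} ≤ e⁴`, and `2θ/(p ε) + θ ≤ 8`; none of these bounds depends on `s`.
-/

open Real Set MeasureTheory Filter

/-- The deviation-angle function `φ_s(x) = x ∫₀¹ dz / √(1 − z^(s−1) − x²(z² − z^(s−1)))`. -/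
noncomputable def phiS (s x : ℝ) : ℝ :=
  x * ∫ z in (0:ℝ)..1, 1 / Real.sqrt (1 - z ^ (s - 1) - x ^ 2 * (z ^ 2 - z ^ (s - 1)))

/-- The impact parameter as a function of the root `x`: `β_s(x) = x/(1 − x²)^(1/(s−1))`. -/
noncomputable def betaS (s x : ℝ) : ℝ := x / (1 - x ^ 2) ^ (1 / (s - 1))

/-- Its derivative. -/
noncomputable def betaS' (s x : ℝ) : ℝ :=
  2 / (s - 1) * (1 - x ^ 2) ^ (-(s / (s - 1))) +
    (s - 3) / (s - 1) * (1 - x ^ 2) ^ (-(1 / (s - 1)))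

/-- The angular part of the collision kernel, as a function of the deviation angle `θ`:
`b_s(cos θ) = (1/2)·2^(4/(s−1))/sin θ · β_s(x_s((π−θ)/2)) β_s′(x_s((π−θ)/2)) x_s′((π−θ)/2)`,
expressed in terms of the inverse `x_s` of `φ_s` and its derivative `x_s′`. -/
noncomputable def bAng (xs xs' : ℝ → ℝ → ℝ) (s θ : ℝ) : ℝ :=
  1 / 2 * (2:ℝ) ^ (4 / (s - 1)) / Real.sin θ *
    (betaS s (xs s ((π - θ) / 2)) * betaS' s (xs s ((π - θ) / 2)) * xs' s ((π - θ) / 2))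

lemma integral_inv_sqrt :
    IntervalIntegrable (fun z : ℝ => 1 / √(1 - z ^ 2)) volume 0 1 ∧
      ∫ z in (0:ℝ)..1, 1 / √(1 - z ^ 2) = π / 2 := by
  have hd : ∀ z ∈ Ioo (0:ℝ) 1, HasDerivAt arcsin (1 / √(1 - z ^ 2)) z := fun z hz =>
    hasDerivAt_arcsin (by linarith [hz.1]) hz.2.ne
  have hi : IntervalIntegrable (fun z : ℝ => 1 / √(1 - z ^ 2)) volume 0 1 := by
    apply intervalIntegral.intervalIntegrable_deriv_of_nonneg (g := arcsin)
    · exact continuous_arcsin.continuousOn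
    · simpa using hd
    · intro z _; positivity
  refine ⟨hi, ?_⟩
  rw [intervalIntegral.integral_eq_sub_of_hasDerivAt_of_le zero_le_one
    continuous_arcsin.continuousOn hd hi]
  simp

/-- The elementary bounds on the radicand of `φ_s`; the last one is Bernoulli's inequality for
`z^p = (z²)^{p/2}`. -/
lemma radicand_bounds {p x z : ℝ} (hp : 2 ≤ p) (hx : x ^ 2 ≤ 1) (hz : z ∈ Ioo (0:ℝ) 1) :
    0 < 1 - z ^ 2 ∧ z ^ p ≤ z ^ 2 ∧
    1 - z ^ 2 ≤ 1 - z ^ p - x ^ 2 * (z ^ 2 - z ^ p) ∧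
    1 - z ^ p - x ^ 2 * (z ^ 2 - z ^ p) ≤ 1 ∧
    1 - z ^ p - x ^ 2 * (z ^ 2 - z ^ p) ≤ (1 - z ^ 2) * (1 + (1 - x ^ 2) * (p / 2 - 1)) := by
  obtain ⟨h0, h1⟩ := hz
  have ha : 0 < 1 - z ^ 2 := by nlinarith
  have hle : z ^ p ≤ z ^ 2 := by
    rw [← rpow_two]
    exact rpow_le_rpow_of_exponent_ge h0 h1.le hp
  have hpos : 0 < z ^ p := rpow_pos_of_pos h0 p
  have hB : 1 + (p / 2) * (z ^ 2 - 1) ≤ z ^ p := by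
    have h := one_add_mul_self_le_rpow_one_add (s := z ^ 2 - 1) (p := p / 2) (by nlinarith)
      (by linarith)
    have e : (1 + (z ^ 2 - 1)) ^ (p / 2) = z ^ p := by
      rw [add_sub_cancel, ← rpow_two, ← rpow_mul h0.le]
      congr 1; ring
    rwa [e] at h
  refine ⟨ha, hle, ?_, ?_, ?_⟩
  · nlinarith [mul_nonneg (sub_nonneg.2 hx) (sub_nonneg.2 hle)]
  · nlinarith [mul_nonneg (sq_nonneg x) (sub_nonneg.2 hle)]
  · nlinarith [mul_nonneg (sub_nonneg.2 hx) (sub_nonneg.2 hB)]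

lemma intervalIntegrable_phiS {s x : ℝ} (hs : 3 ≤ s) (hx : x ^ 2 ≤ 1) :
    IntervalIntegrable
      (fun z : ℝ => 1 / √(1 - z ^ (s - 1) - x ^ 2 * (z ^ 2 - z ^ (s - 1)))) volume 0 1 := by
  rw [intervalIntegrable_iff_integrableOn_Ioo_of_le zero_le_one]
  have hi := (intervalIntegrable_iff_integrableOn_Ioo_of_le zero_le_one).1 integral_inv_sqrt.1
  refine Integrable.mono' hi (Measurable.aestronglyMeasurable (by fun_prop)) ?_
  filter_upwards [ae_restrict_mem measurableSet_Ioo] with z hz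
  obtain ⟨ha, -, h1, -, -⟩ := radicand_bounds (p := s - 1) (by linarith) hx hz
  rw [norm_of_nonneg (by positivity)]
  exact one_div_le_one_div_of_le (sqrt_pos.2 ha) (sqrt_le_sqrt h1)

lemma phiS_expand {s x y : ℝ} (hs : 3 ≤ s) (hx : 0 ≤ x) (hxy : x ≤ y) (hy : y < 1) :
    y - x ≤ phiS s y - phiS s x := by
  have hx2 : x ^ 2 ≤ 1 := by nlinarith
  have hy2 : y ^ 2 ≤ 1 := by nlinarith
  have hxi := intervalIntegrable_phiS hs hx2
  have hyi := intervalIntegrable_phiS hs hy2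
  have hmono := intervalIntegral.integral_mono_on_of_le_Ioo zero_le_one hxi hyi (by
    intro z hz
    obtain ⟨ha, hle, -, -, -⟩ := radicand_bounds (p := s - 1) (by linarith) hx2 hz
    obtain ⟨-, -, h1, -, -⟩ := radicand_bounds (p := s - 1) (by linarith) hy2 hz
    refine one_div_le_one_div_of_le (sqrt_pos.2 (ha.trans_le h1)) (sqrt_le_sqrt ?_)
    have : x ^ 2 ≤ y ^ 2 := by gcongr
    nlinarith [mul_nonneg (sub_nonneg.2 this) (sub_nonneg.2 hle)])
  have hone := intervalIntegral.integral_mono_on_of_le_Ioo zero_le_one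
    (intervalIntegrable_const (c := (1:ℝ))) hxi (by
    intro z hz
    obtain ⟨ha, -, h1, h2, -⟩ := radicand_bounds (p := s - 1) (by linarith) hx2 hz
    rw [le_div_iff₀ (sqrt_pos.2 (ha.trans_le h1)), one_mul]
    exact sqrt_le_one.2 h2)
  simp only [intervalIntegral.integral_const, smul_eq_mul, sub_zero, mul_one] at hone
  unfold phiS
  nlinarith [mul_le_mul_of_nonneg_left hmono (hx.trans hxy),
    mul_le_mul_of_nonneg_left hone (sub_nonneg.2 hxy)]

/-- Grazing collisions: the deviation angle is at most of order `(s - 1)(1 - x²)`. -/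
lemma pi_sub_two_phiS_le {s x : ℝ} (hs : 3 ≤ s) (hx : 0 ≤ x) (hx1 : x < 1) :
    π - 2 * phiS s x ≤ π / 2 * ((1 - x ^ 2) * (s - 1)) := by
  have hx2 : x ^ 2 ≤ 1 := by nlinarith
  set k := 1 + (1 - x ^ 2) * ((s - 1) / 2 - 1) with hk
  have hk1 : 1 ≤ k := by nlinarith [mul_nonneg (sub_nonneg.2 hx2) (sub_nonneg.2 hs)]
  have hlow := intervalIntegral.integral_mono_on_of_le_Ioo zero_le_one
    (integral_inv_sqrt.1.mul_const (1 / k)) (intervalIntegrable_phiS hs hx2) (by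
    intro z hz
    obtain ⟨ha, -, h1, -, h3⟩ := radicand_bounds (p := s - 1) (by linarith) hx2 hz
    rw [div_mul_div_comm, one_mul]
    refine one_div_le_one_div_of_le (sqrt_pos.2 (ha.trans_le h1)) ?_
    refine (sqrt_le_sqrt h3).trans ?_
    rw [sqrt_mul ha.le]
    gcongr
    exact sqrt_le_iff.2 ⟨by linarith, by nlinarith⟩)
  rw [intervalIntegral.integral_mul_const, integral_inv_sqrt.2] at hlow
  have h1 : x * (π / 2 * (1 / k)) ≤ phiS s x := mul_le_mul_of_nonneg_left hlow hx
  have h2 : 1 - x * (1 / k) ≤ (1 - x ^ 2) * (s - 1) / 2 := by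
    have h4 : (1 - x ^ 2) * (s - 1) / 2 = k - x ^ 2 := by rw [hk]; ring
    have h5 : 1 - x * (1 / k) = (k - x) / k := by field_simp
    rw [h4, h5, div_le_iff₀ (by linarith)]
    nlinarith
  nlinarith [mul_le_mul_of_nonneg_left h2 pi_pos.le]

/-- A right inverse of the expanding map `φ_s` has derivative at most `1`: its forward difference
quotients are at most `1`. -/
lemma deriv_inverse_le_one {s : ℝ} (hs : 3 ≤ s) {g : ℝ → ℝ} {g' φ : ℝ}
    (hinv : ∀ φ ∈ Ico (0:ℝ) (π / 2), g φ ∈ Ico (0:ℝ) 1 ∧ phiS s (g φ) = φ)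
    (hφ : φ ∈ Ico (0:ℝ) (π / 2)) (hd : HasDerivWithinAt g g' (Ico 0 (π / 2)) φ) : g' ≤ 1 := by
  have hd' : HasDerivWithinAt g g' (Ioo φ (π / 2)) φ :=
    hd.mono fun ψ hψ => ⟨hφ.1.trans hψ.1.le, hψ.2⟩
  rw [hasDerivWithinAt_iff_tendsto_slope' left_notMem_Ioo] at hd'
  have := left_nhdsWithin_Ioo_neBot hφ.2
  refine le_of_tendsto hd' ?_
  filter_upwards [self_mem_nhdsWithin] with ψ hψ
  obtain ⟨hφ1, hφ2⟩ := hinv φ hφ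
  obtain ⟨hψ1, hψ2⟩ := hinv ψ ⟨hφ.1.trans hψ.1.le, hψ.2⟩
  rw [slope_def_field, div_le_one (sub_pos.2 hψ.1)]
  rcases le_total (g ψ) (g φ) with h | h
  · linarith [hψ.1]
  · simpa only [hφ2, hψ2] using phiS_expand hs hφ1.1 h hψ1.2

/-- The final estimate, with `p = s - 1` and `ε = 1 - x²`. -/
lemma angular_bound {p ε x θ : ℝ} (hp : 2 ≤ p) (hε : 0 < ε) (hx : 0 ≤ x) (hx1 : x < 1)
    (hθ : 0 < θ) (hθπ : θ ≤ π) (h : θ ≤ π / 2 * (ε * p)) :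
    θ ^ (1 + 2 / p) * (1 / 2 * (2:ℝ) ^ (4 / p)) * (x / ε ^ (1 / p) *
      (2 / p * ε ^ (-((p + 1) / p)) + (p - 2) / p * ε ^ (-(1 / p)))) ≤ 16 * exp 4 := by
  have hp0 : 0 < p := by linarith
  have hA : (2:ℝ) ^ (4 / p) ≤ 4 := by
    calc (2:ℝ) ^ (4 / p) ≤ 2 ^ (2:ℝ) :=
          rpow_le_rpow_of_exponent_le one_le_two (by rw [div_le_iff₀ hp0]; linarith)
      _ = 4 := by norm_num
  have hq : θ / ε ≤ 2 * p := by
    rw [div_le_iff₀ hε]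
    nlinarith [pi_le_four, mul_pos hε hp0]
  have hB : (θ / ε) ^ (2 / p) ≤ exp 4 := by
    calc (θ / ε) ^ (2 / p) ≤ (exp (2 * p)) ^ (2 / p) := by
          gcongr
          linarith [add_one_le_exp (2 * p)]
      _ = exp 4 := by
          rw [← exp_mul]
          congr 1; field_simp; norm_num
  have hC : θ * (2 / p / ε + (p - 2) / p) ≤ 8 := by
    have h1 : θ * (2 / p / ε) = 2 / p * (θ / ε) := by ring
    have h2 : 2 / p * (θ / ε) ≤ 4 := by
      calc 2 / p * (θ / ε) ≤ 2 / p * (2 * p) := by gcongr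
        _ = 4 := by field_simp; norm_num
    have h3 : (p - 2) / p ≤ 1 := by rw [div_le_one hp0]; linarith
    nlinarith [pi_le_four]
  have hC0 : 0 ≤ θ * (2 / p / ε + (p - 2) / p) := by
    have : 0 ≤ (p - 2) / p := div_nonneg (by linarith) hp0.le
    positivity
  have e1 : θ ^ (1 + 2 / p) = θ * θ ^ (2 / p) := by rw [rpow_add hθ, rpow_one]
  have e2 : ε ^ (-((p + 1) / p)) = (ε ^ (1 / p))⁻¹ / ε := by
    rw [show -((p + 1) / p) = -(1 / p) - 1 by field_simp; ring, rpow_sub_one hε.ne',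
      rpow_neg hε.le]
  have e3 : ε ^ (2 / p) = ε ^ (1 / p) * ε ^ (1 / p) := by
    rw [← rpow_add hε]; congr 1; ring
  have hu : 0 < ε ^ (1 / p) := rpow_pos_of_pos hε _
  have e4 : θ ^ (1 + 2 / p) * (1 / 2 * (2:ℝ) ^ (4 / p)) * (x / ε ^ (1 / p) *
      (2 / p * ε ^ (-((p + 1) / p)) + (p - 2) / p * ε ^ (-(1 / p)))) =
      (1 / 2 * (2:ℝ) ^ (4 / p)) * x * (θ / ε) ^ (2 / p) *
        (θ * (2 / p / ε + (p - 2) / p)) := by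
    rw [e1, e2, rpow_neg hε.le, div_rpow hθ.le hε.le, e3]
    field_simp
  rw [e4]
  calc _ ≤ (1 / 2 * 4) * 1 * exp 4 * 8 := by gcongr
    _ = 16 * exp 4 := by ring

/-- With `x_s` the inverse of `φ_s` and `x_s′` its derivative for each `s ≥ 3`, the quantity
`sup_{s ≥ 3} sup_{θ ∈ (0,π]} θ^(1+2/(s−1)) · b_s(cos θ) · sin θ` is finite. -/
theorem stmt12 (xs xs' : ℝ → ℝ → ℝ)
    (hinv : ∀ s : ℝ, 3 ≤ s → ∀ φ ∈ Ico (0:ℝ) (π / 2),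
      xs s φ ∈ Ico (0:ℝ) 1 ∧ phiS s (xs s φ) = φ)
    (hderiv : ∀ s : ℝ, 3 ≤ s → ∀ φ ∈ Ico (0:ℝ) (π / 2),
      HasDerivWithinAt (xs s) (xs' s φ) (Ico 0 (π / 2)) φ) :
    ∃ C : ℝ, ∀ s : ℝ, 3 ≤ s → ∀ θ ∈ Ioc (0:ℝ) π,
      θ ^ (1 + 2 / (s - 1)) * bAng xs xs' s θ * Real.sin θ ≤ C := by
  refine ⟨16 * exp 4, fun s hs θ hθ => ?_⟩
  rcases hθ.2.eq_or_lt with rfl | hlt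
  -- At `θ = π` the factor `sin θ` vanishes and does not cancel the (junk) quotient in `bAng`.
  · rw [sin_pi, mul_zero]; positivity
  have hφ : (π - θ) / 2 ∈ Ico (0:ℝ) (π / 2) := ⟨by linarith, by linarith [hθ.1]⟩
  obtain ⟨⟨hx0, hx1⟩, hxφ⟩ := hinv s hs _ hφ
  have hd := deriv_inverse_le_one hs (hinv s hs) hφ (hderiv s hs _ hφ)
  have hang := pi_sub_two_phiS_le hs hx0 hx1
  rw [hxφ] at hang
  have hsin : 0 < sin θ := sin_pos_of_pos_of_lt_pi hθ.1 hlt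
  unfold bAng betaS betaS'
  set x := xs s ((π - θ) / 2)
  have hε : 0 < 1 - x ^ 2 := by nlinarith
  have key := angular_bound (p := s - 1) (ε := 1 - x ^ 2) (x := x) (θ := θ) (by linarith) hε hx0
    hx1 hθ.1 hθ.2 (by linarith)
  rw [show s - 1 + 1 = s by ring, show s - 1 - 2 = s - 3 by ring] at key
  have hθ0 : 0 < θ := hθ.1
  have hP : 0 ≤ θ ^ (1 + 2 / (s - 1)) * (1 / 2 * (2:ℝ) ^ (4 / (s - 1))) *
      (x / (1 - x ^ 2) ^ (1 / (s - 1)) * (2 / (s - 1) * (1 - x ^ 2) ^ (-(s / (s - 1))) +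
        (s - 3) / (s - 1) * (1 - x ^ 2) ^ (-(1 / (s - 1))))) := by
    have h1 : 0 < s - 1 := by linarith
    have h3 : 0 ≤ s - 3 := by linarith
    positivity
  calc _ = θ ^ (1 + 2 / (s - 1)) * (1 / 2 * (2:ℝ) ^ (4 / (s - 1))) *
      (x / (1 - x ^ 2) ^ (1 / (s - 1)) * (2 / (s - 1) * (1 - x ^ 2) ^ (-(s / (s - 1))) +
        (s - 3) / (s - 1) * (1 - x ^ 2) ^ (-(1 / (s - 1))))) * xs' s ((π - θ) / 2) *
        (sin θ / sin θ) := by ring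
    _ ≤ _ := by
      rw [div_self hsin.ne', mul_one]
      exact (mul_le_of_le_one_right hP hd).trans key
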